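/- If f ∈ H² is an outer function and ω ∈ H^∞ is a nonconstant inner function, then the composition f∘ω belongs to H² and is an outer function. -/

import Mathlib

open MeasureTheory Complex

noncomputable section

instance : Fact (0 < 2 * Real.pi) := ⟨Real.two_pi_pos⟩

/-- The boundary point `e^{is}` of the unit circle corresponding to `s : ℝ/2πℤ`. -/
def bdry (s : AddCircle (2 * Real.pi)) : ℂ := (AddCircle.toCircle s : ℂ)

/-- An inner function: a bounded holomorphic function on the open unit disc whose radial
limits exist and have modulus one almost everywhere on the unit circle. -/
def InnerDisc (θ : ℂ → ℂ) : Prop :=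
  DifferentiableOn ℂ θ (Metric.ball (0 : ℂ) 1) ∧
  (∃ C : ℝ, ∀ z ∈ Metric.ball (0 : ℂ) 1, ‖θ z‖ ≤ C) ∧
  ∀ᵐ s ∂(volume : Measure (AddCircle (2 * Real.pi))),
    ∃ L : ℂ, ‖L‖ = 1 ∧
      Filter.Tendsto (fun r : ℝ => θ ((r : ℂ) * bdry s)) (nhdsWithin 1 (Set.Iio 1)) (nhds L)

/-- The integral mean `∫₀^{2π} ‖f(r e^{it})‖² dt`. -/
def discIntegral (f : ℂ → ℂ) (r : ℝ) : ℝ :=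
  ∫ s : AddCircle (2 * Real.pi), ‖f ((r : ℂ) * bdry s)‖ ^ 2

/-- The Hardy space `H²` of the disc: holomorphic functions on `𝔻` with
`sup_{0<r<1} ∫₀^{2π} ‖f(r e^{it})‖² dt < ∞`. -/
def MemH2Disc (f : ℂ → ℂ) : Prop :=
  DifferentiableOn ℂ f (Metric.ball (0 : ℂ) 1) ∧
  ∃ C : ℝ, ∀ r : ℝ, 0 < r → r < 1 → discIntegral f r ≤ C

/-- The square of the `H²` norm: `sup_{0<r<1} ∫₀^{2π} ‖f(r e^{it})‖² dt`. -/
def H2normSq (f : ℂ → ℂ) : ℝ :=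
  sSup {y : ℝ | ∃ r : ℝ, 0 < r ∧ r < 1 ∧ y = discIntegral f r}

/-- `f` is outer: `f ∈ H²` and `{f·p : p polynomial}` is dense in `H²`. -/
def IsOuterDisc (f : ℂ → ℂ) : Prop :=
  MemH2Disc f ∧ ∀ g : ℂ → ℂ, MemH2Disc g → ∀ ε : ℝ, 0 < ε →
    ∃ p : Polynomial ℂ, H2normSq (fun z => g z - f z * p.eval z) < ε

/-!
Composition with a holomorphic self-map `ω` of the disc is bounded on `H²` (Littlewood
subordination): `|f|²` is majorized by its Poisson integral `u`, and `u ∘ ω` is harmonic, so its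
circular means equal `u (ω 0)`. Hence if `pₙ f → 1` in `H²` then, for every polynomial `q`,
`q (pₙ ∘ ω) (f ∘ ω) → q`. The left-hand sides are multiples of `F = f ∘ ω` by bounded holomorphic
functions `h`. These lie in the closure of the polynomial multiples of `F`: the dilation `h_ρ` is a
uniform limit of polynomials on the disc, and `F h - F h_ρ = (F h - (F h)_ρ) - (F - F_ρ) h_ρ` tends
to `0` in `H²` as `ρ → 1`. Since polynomials are dense in `H²`, `F` is outer.

A nonconstant inner function `θ` maps the disc into itself: the Poisson bound
`|θ(z)|² ≤ (1 + |z|) / (1 - |z|)` also holds for all powers of `θ`, so `|θ| ≤ 1`, and the maximum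
principle applies.
-/

open Metric Filter Topology
open Real (circleAverage)
open scoped Polynomial

section PoissonIntegral

variable {φ : ℂ → ℝ} {g ω : ℂ → ℂ} {c w ζ : ℂ} {r R : ℝ}

lemma norm_circleAverage_le {E : Type*} [NormedAddCommGroup E] [NormedSpace ℝ E] (f : ℂ → E)
    (c : ℂ) (R : ℝ) : ‖circleAverage f c R‖ ≤ circleAverage (fun z => ‖f z‖) c R := by
  rw [Real.circleAverage_def, Real.circleAverage_def, norm_smul, smul_eq_mul,
    Real.norm_of_nonneg (by positivity)]
  gcongr
  exact intervalIntegral.norm_integral_le_integral_norm Real.two_pi_pos.le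

lemma poissonKernel_nonneg (h : ‖w - c‖ ≤ ‖ζ - c‖) : 0 ≤ poissonKernel c w ζ := by
  rw [poissonKernel_def]
  have := pow_le_pow_left₀ (norm_nonneg _) h 2
  exact div_nonneg (sub_nonneg.2 this) (sq_nonneg _)

lemma poissonKernel_le (hζ : ζ ∈ sphere c R) (hw : w ∈ ball c R) :
    poissonKernel c w ζ ≤ (R + ‖w - c‖) / (R - ‖w - c‖) := by
  rw [poissonKernel_eq_re_herglotzRieszKernel]
  exact re_herglotzRieszKernel_le hζ hw

lemma continuousOn_poissonKernel_sphere (hw : w ∈ ball c R) :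
    ContinuousOn (poissonKernel c w) (sphere c |R|) := by
  rw [poissonKernel_eq_re_herglotzRieszKernel]
  exact continuous_re.comp_continuousOn (continuousOn_herglotzRieszKernel_sphere hw)

/-- The Poisson integral, at the point `w`, of the restriction of `φ` to the circle of radius `R`
centred at the origin. -/
def poissonIntegral (φ : ℂ → ℝ) (R : ℝ) (w : ℂ) : ℝ :=
  circleAverage (fun ζ => poissonKernel 0 w ζ * φ ζ) 0 R

lemma exists_differentiableOn_poissonIntegral_eqOn_re (hφ : CircleIntegrable φ 0 R) :
    ∃ H : ℂ → ℂ, DifferentiableOn ℂ H (ball 0 R) ∧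
      Set.EqOn (poissonIntegral φ R) (fun w => (H w).re) (ball 0 R) := by
  have hφ' : CircleIntegrable (fun ζ => (φ ζ : ℂ)) 0 R := ⟨hφ.1.ofReal, hφ.2.ofReal⟩
  refine ⟨_, differentiableOn_circleAverage_herglotzRieszKernel_smul hφ', fun w hw => ?_⟩
  simp only [re_circleAverage_herglotzRieszKernel_smul hφ hw, poissonIntegral,
    poissonKernel_eq_re_herglotzRieszKernel]
  rfl

lemma continuousOn_poissonIntegral (hφ : CircleIntegrable φ 0 R) :
    ContinuousOn (poissonIntegral φ R) (ball 0 R) := by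
  obtain ⟨H, hH, hre⟩ := exists_differentiableOn_poissonIntegral_eqOn_re hφ
  exact (continuous_re.comp_continuousOn hH.continuousOn).congr hre

lemma circleAverage_poissonIntegral_comp (hφ : CircleIntegrable φ 0 R) (hr : 0 < r)
    (hω : DiffContOnCl ℂ ω (ball c r)) (hmap : Set.MapsTo ω (closedBall c r) (ball 0 R)) :
    circleAverage (fun z => poissonIntegral φ R (ω z)) c r = poissonIntegral φ R (ω c) := by
  obtain ⟨H, hH, hre⟩ := exists_differentiableOn_poissonIntegral_eqOn_re hφ
  have hHω : DiffContOnCl ℂ (H ∘ ω) (ball c |r|) := by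
    rw [abs_of_pos hr]
    exact .mk_ball (hH.comp hω.differentiableOn (hmap.mono_left ball_subset_closedBall))
      (hH.continuousOn.comp hω.continuousOn_ball hmap)
  have hint : CircleIntegrable (H ∘ ω) c r := by
    rw [abs_of_pos hr] at hHω
    exact (hHω.continuousOn_ball.mono sphere_subset_closedBall).circleIntegrable hr.le
  calc circleAverage (fun z => poissonIntegral φ R (ω z)) c r
      = circleAverage (reCLM ∘ (H ∘ ω)) c r :=
        Real.circleAverage_congr_sphere fun z hz =>
          hre (hmap (sphere_subset_closedBall (abs_of_pos hr ▸ hz)))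
    _ = (H (ω c)).re := by
        rw [reCLM.circleAverage_comp_comm hint, hHω.circleAverage]; rfl
    _ = poissonIntegral φ R (ω c) := (hre (hmap (mem_closedBall_self hr.le))).symm

lemma norm_sq_le_poissonIntegral (hg : DiffContOnCl ℂ g (ball 0 R)) (hw : w ∈ ball 0 R) :
    ‖g w‖ ^ 2 ≤ poissonIntegral (fun ζ => ‖g ζ‖ ^ 2) R w := by
  have hR : 0 < R := pos_of_mem_ball hw
  have hg2 : DiffContOnCl ℂ (g • g) (ball 0 R) := hg.smul hg
  calc ‖g w‖ ^ 2 = ‖circleAverage (poissonKernel 0 w • (g • g)) 0 R‖ := by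
        rw [hg2.circleAverage_poissonKernel_smul hw, Pi.smul_apply', norm_smul, sq]
    _ ≤ circleAverage (fun ζ => ‖(poissonKernel 0 w • (g • g)) ζ‖) 0 R :=
        norm_circleAverage_le _ _ _
    _ = poissonIntegral (fun ζ => ‖g ζ‖ ^ 2) R w :=
        Real.circleAverage_congr_sphere fun ζ hζ => by
          have hle : ‖w - 0‖ ≤ ‖ζ - 0‖ := by
            rw [abs_of_pos hR, mem_sphere_iff_norm] at hζ
            exact hζ ▸ (mem_ball_iff_norm.1 hw).le
          simp only [Pi.smul_apply', norm_smul, Real.norm_of_nonneg (poissonKernel_nonneg hle), sq]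

lemma poissonIntegral_le (hφ : ContinuousOn φ (sphere 0 R)) (hφ0 : ∀ ζ ∈ sphere 0 R, 0 ≤ φ ζ)
    (hw : w ∈ ball 0 R) :
    poissonIntegral φ R w ≤ (R + ‖w‖) / (R - ‖w‖) * circleAverage φ 0 R := by
  have hR : 0 < R := pos_of_mem_ball hw
  have hK : ContinuousOn (poissonKernel 0 w) (sphere 0 R) := by
    simpa only [abs_of_pos hR] using continuousOn_poissonKernel_sphere hw
  rw [← smul_eq_mul, ← Real.circleAverage_fun_smul]
  refine Real.circleAverage_mono ((hK.mul hφ).circleIntegrable hR.le)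
    ((hφ.fun_const_smul _).circleIntegrable hR.le) fun ζ hζ => ?_
  rw [abs_of_pos hR] at hζ
  have := poissonKernel_le hζ hw
  rw [sub_zero] at this
  exact mul_le_mul_of_nonneg_right this (hφ0 ζ hζ)

lemma circleAverage_norm_sq_comp_le (hg : DiffContOnCl ℂ g (ball 0 R)) (hr : 0 < r)
    (hω : DiffContOnCl ℂ ω (ball c r)) (hmap : Set.MapsTo ω (closedBall c r) (ball 0 R)) :
    circleAverage (fun z => ‖g (ω z)‖ ^ 2) c r
      ≤ poissonIntegral (fun ζ => ‖g ζ‖ ^ 2) R (ω c) := by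
  have hR : 0 < R := pos_of_mem_ball (hmap (mem_closedBall_self hr.le))
  have hgR : CircleIntegrable (fun ζ => ‖g ζ‖ ^ 2) 0 R :=
    ((hg.continuousOn_ball.mono sphere_subset_closedBall).norm.pow 2).circleIntegrable hR.le
  have hmapS : Set.MapsTo ω (sphere c r) (ball 0 R) := hmap.mono_left sphere_subset_closedBall
  have hωc : ContinuousOn ω (sphere c r) := hω.continuousOn_ball.mono sphere_subset_closedBall
  rw [← circleAverage_poissonIntegral_comp hgR hr hω hmap]
  refine Real.circleAverage_mono
    (((hg.differentiableOn.continuousOn.comp hωc hmapS).norm.pow 2).circleIntegrable hr.le)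
    (((continuousOn_poissonIntegral hgR).comp hωc hmapS).circleIntegrable hr.le)
    fun z hz => norm_sq_le_poissonIntegral hg (hmapS (abs_of_pos hr ▸ hz))

end PoissonIntegral

section HardySpace

variable {f g ω : ℂ → ℂ} {φ : ℂ → ℝ} {w : ℂ} {r R C : ℝ}

lemma norm_real_mul_bdry (hr : 0 ≤ r) (s : AddCircle (2 * Real.pi)) : ‖(r : ℂ) * bdry s‖ = r := by
  rw [norm_mul, Complex.norm_of_nonneg hr, bdry, Circle.norm_coe, mul_one]

lemma continuous_comp_bdry {E : Type*} [TopologicalSpace E] {F : ℂ → E}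
    (hF : ContinuousOn F (ball 0 1)) (hr : 0 ≤ r) (hr1 : r < 1) :
    Continuous fun s => F ((r : ℂ) * bdry s) :=
  hF.comp_continuous
    (continuous_const.mul (continuous_subtype_val.comp AddCircle.continuous_toCircle))
    fun s => by rwa [mem_ball_zero_iff, norm_real_mul_bdry hr]

lemma discIntegral_eq_circleAverage (f : ℂ → ℂ) (r : ℝ) :
    discIntegral f r = 2 * Real.pi * circleAverage (fun z => ‖f z‖ ^ 2) 0 r := by
  rw [discIntegral, ← AddCircle.intervalIntegral_preimage (2 * Real.pi) 0, Real.circleAverage_def,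
    smul_eq_mul, mul_inv_cancel_left₀ Real.two_pi_pos.ne', zero_add]
  congr 1 with t
  simp [bdry, AddCircle.toCircle_apply_mk, circleMap]

lemma discIntegral_nonneg (f : ℂ → ℂ) (r : ℝ) : 0 ≤ discIntegral f r :=
  integral_nonneg fun _ => sq_nonneg _

lemma discIntegral_le_of_norm_sq_le (hr : 0 ≤ r) (hf : ContinuousOn f (sphere 0 r))
    (hφ : ContinuousOn φ (sphere 0 r)) (h : ∀ z ∈ sphere 0 r, ‖f z‖ ^ 2 ≤ φ z) :
    discIntegral f r ≤ 2 * Real.pi * circleAverage φ 0 r := by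
  rw [discIntegral_eq_circleAverage]
  refine mul_le_mul_of_nonneg_left ?_ Real.two_pi_pos.le
  exact Real.circleAverage_mono ((hf.norm.pow 2).circleIntegrable hr) (hφ.circleIntegrable hr)
    (by rwa [abs_of_nonneg hr])

lemma discIntegral_add_le (hr : 0 ≤ r) (hf : ContinuousOn f (sphere 0 r))
    (hg : ContinuousOn g (sphere 0 r)) :
    discIntegral (f + g) r ≤ 2 * (discIntegral f r + discIntegral g r) := by
  have hf2 : ContinuousOn (fun z => ‖f z‖ ^ 2) (sphere 0 r) := hf.norm.pow 2
  have hg2 : ContinuousOn (fun z => ‖g z‖ ^ 2) (sphere 0 r) := hg.norm.pow 2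
  refine (discIntegral_le_of_norm_sq_le hr (hf.add hg) ((hf2.add hg2).const_smul (2 : ℝ))
    fun z _ => (pow_le_pow_left₀ (norm_nonneg _) (norm_add_le _ _) 2).trans add_sq_le).trans_eq ?_
  rw [Real.circleAverage_smul, Real.circleAverage_add (hf2.circleIntegrable hr)
    (hg2.circleIntegrable hr), discIntegral_eq_circleAverage f, discIntegral_eq_circleAverage g,
    smul_eq_mul]
  ring

lemma discIntegral_mul_le {M : ℝ} (hr : 0 ≤ r) (hf : ContinuousOn f (sphere 0 r))
    (hg : ContinuousOn g (sphere 0 r)) (hM : ∀ z ∈ sphere 0 r, ‖g z‖ ≤ M) :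
    discIntegral (f * g) r ≤ M ^ 2 * discIntegral f r := by
  have hf2 : ContinuousOn (fun z => ‖f z‖ ^ 2) (sphere 0 r) := hf.norm.pow 2
  refine (discIntegral_le_of_norm_sq_le hr (hf.mul hg) (hf2.const_smul (M ^ 2))
    fun z hz => ?_).trans_eq ?_
  · rw [Pi.mul_apply, norm_mul, mul_pow, mul_comm]
    exact mul_le_mul_of_nonneg_right (pow_le_pow_left₀ (norm_nonneg _) (hM z hz) 2) (sq_nonneg _)
  · rw [Real.circleAverage_smul, discIntegral_eq_circleAverage, smul_eq_mul]
    ring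

lemma H2normSq_nonneg (f : ℂ → ℂ) : 0 ≤ H2normSq f :=
  Real.sSup_nonneg fun _ ⟨_, _, _, hy⟩ => hy ▸ discIntegral_nonneg _ _

lemma H2normSq_le (h : ∀ r : ℝ, 0 < r → r < 1 → discIntegral f r ≤ C) : H2normSq f ≤ C :=
  csSup_le ⟨_, 1 / 2, by norm_num, by norm_num, rfl⟩ fun _ ⟨r, hr, hr1, hy⟩ => hy ▸ h r hr hr1

namespace MemH2Disc

lemma discIntegral_le_H2normSq (hf : MemH2Disc f) (hr : 0 < r) (hr1 : r < 1) :
    discIntegral f r ≤ H2normSq f := by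
  obtain ⟨C, hC⟩ := hf.2
  exact le_csSup ⟨C, fun _ ⟨r, hr, hr1, hy⟩ => hy ▸ hC r hr hr1⟩ ⟨r, hr, hr1, rfl⟩

lemma continuousOn_sphere (hf : MemH2Disc f) (hr1 : r < 1) : ContinuousOn f (sphere 0 r) :=
  hf.1.continuousOn.mono (sphere_subset_closedBall.trans (closedBall_subset_ball hr1))

lemma discIntegral_add_le_H2normSq (hf : MemH2Disc f) (hg : MemH2Disc g) (hr : 0 < r)
    (hr1 : r < 1) : discIntegral (f + g) r ≤ 2 * (H2normSq f + H2normSq g) :=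
  (discIntegral_add_le hr.le (hf.continuousOn_sphere hr1) (hg.continuousOn_sphere hr1)).trans <|
    mul_le_mul_of_nonneg_left (add_le_add (hf.discIntegral_le_H2normSq hr hr1)
      (hg.discIntegral_le_H2normSq hr hr1)) two_pos.le

lemma add (hf : MemH2Disc f) (hg : MemH2Disc g) : MemH2Disc (f + g) :=
  ⟨hf.1.add hg.1, _, fun _ => hf.discIntegral_add_le_H2normSq hg⟩

lemma H2normSq_add_le (hf : MemH2Disc f) (hg : MemH2Disc g) :
    H2normSq (f + g) ≤ 2 * (H2normSq f + H2normSq g) :=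
  H2normSq_le fun _ => hf.discIntegral_add_le_H2normSq hg

lemma neg (hf : MemH2Disc f) : MemH2Disc (-f) := by
  refine ⟨hf.1.neg, ?_⟩
  simpa only [discIntegral, Pi.neg_apply, norm_neg] using hf.2

lemma sub (hf : MemH2Disc f) (hg : MemH2Disc g) : MemH2Disc (f - g) :=
  sub_eq_add_neg f g ▸ hf.add hg.neg

lemma discIntegral_mul_le_H2normSq {M : ℝ} (hf : MemH2Disc f) (hg : DifferentiableOn ℂ g (ball 0 1))
    (hM : ∀ z ∈ ball 0 1, ‖g z‖ ≤ M) (hr : 0 < r) (hr1 : r < 1) :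
    discIntegral (f * g) r ≤ M ^ 2 * H2normSq f := by
  have hsub : sphere (0 : ℂ) r ⊆ ball 0 1 :=
    sphere_subset_closedBall.trans (closedBall_subset_ball hr1)
  exact (discIntegral_mul_le hr.le (hf.continuousOn_sphere hr1) (hg.continuousOn.mono hsub)
    fun z hz => hM z (hsub hz)).trans
    (mul_le_mul_of_nonneg_left (hf.discIntegral_le_H2normSq hr hr1) (sq_nonneg M))

lemma mul {M : ℝ} (hf : MemH2Disc f) (hg : DifferentiableOn ℂ g (ball 0 1))
    (hM : ∀ z ∈ ball 0 1, ‖g z‖ ≤ M) : MemH2Disc (f * g) :=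
  ⟨hf.1.mul hg, _, fun _ => hf.discIntegral_mul_le_H2normSq hg hM⟩

lemma H2normSq_mul_le {M : ℝ} (hf : MemH2Disc f) (hg : DifferentiableOn ℂ g (ball 0 1))
    (hM : ∀ z ∈ ball 0 1, ‖g z‖ ≤ M) : H2normSq (f * g) ≤ M ^ 2 * H2normSq f :=
  H2normSq_le fun _ => hf.discIntegral_mul_le_H2normSq hg hM

end MemH2Disc

lemma two_pi_mul_poissonIntegral_le (hg : ContinuousOn g (sphere 0 R)) (hw : w ∈ ball 0 R) :
    2 * Real.pi * poissonIntegral (fun ζ => ‖g ζ‖ ^ 2) R w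
      ≤ (R + ‖w‖) / (R - ‖w‖) * discIntegral g R := by
  rw [discIntegral_eq_circleAverage, mul_left_comm]
  gcongr
  exact poissonIntegral_le (hg.norm.pow 2) (fun _ _ => sq_nonneg _) hw

lemma tendsto_add_div_sub {a : ℝ} (ha : a < 1) :
    Tendsto (fun R : ℝ => (R + a) / (R - a)) (𝓝[<] 1) (𝓝 ((1 + a) / (1 - a))) := by
  have : ContinuousAt (fun R : ℝ => (R + a) / (R - a)) 1 :=
    .div (by fun_prop) (by fun_prop) (sub_pos.2 ha).ne'
  exact this.tendsto.mono_left nhdsWithin_le_nhds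

lemma eventually_mapsTo_ball (hω : ContinuousOn ω (ball 0 1))
    (hmap : Set.MapsTo ω (ball 0 1) (ball 0 1)) (hr1 : r < 1) :
    ∀ᶠ R : ℝ in 𝓝[<] 1, Set.MapsTo ω (closedBall 0 r) (ball 0 R) := by
  have hsub : closedBall (0 : ℂ) r ⊆ ball 0 1 := closedBall_subset_ball hr1
  rcases (closedBall (0 : ℂ) r).eq_empty_or_nonempty with h | h
  · exact .of_forall fun R => h ▸ Set.mapsTo_empty _ _
  obtain ⟨z, hz, hmax⟩ := (isCompact_closedBall _ _).exists_isMaxOn h (hω.mono hsub).norm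
  filter_upwards [Ioo_mem_nhdsLT (mem_ball_zero_iff.1 (hmap (hsub hz)))] with R hR y hy
  exact mem_ball_zero_iff.2 ((hmax hy).trans_lt hR.1)

lemma MemH2Disc.discIntegral_comp_le (hf : MemH2Disc f) (hω : DifferentiableOn ℂ ω (ball 0 1))
    (hmap : Set.MapsTo ω (ball 0 1) (ball 0 1)) (hr : 0 < r) (hr1 : r < 1) :
    discIntegral (f ∘ ω) r ≤ (1 + ‖ω 0‖) / (1 - ‖ω 0‖) * H2normSq f := by
  have hω0 : ‖ω 0‖ < 1 := mem_ball_zero_iff.1 (hmap (mem_ball_self one_pos))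
  refine ge_of_tendsto ((tendsto_add_div_sub hω0).mul_const _) ?_
  filter_upwards [eventually_mapsTo_ball hω.continuousOn hmap hr1,
    Ioo_mem_nhdsLT (zero_lt_one' ℝ)] with R hωR hR
  have hω0R : ω 0 ∈ ball 0 R := hωR (mem_closedBall_self hr.le)
  have hfR : DiffContOnCl ℂ f (ball 0 R) :=
    (hf.1.mono (closedBall_subset_ball hR.2)).diffContOnCl_ball le_rfl
  have hωr : DiffContOnCl ℂ ω (ball 0 r) :=
    (hω.mono (closedBall_subset_ball hr1)).diffContOnCl_ball le_rfl
  calc discIntegral (f ∘ ω) r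
      = 2 * Real.pi * circleAverage (fun z => ‖f (ω z)‖ ^ 2) 0 r :=
        discIntegral_eq_circleAverage _ _
    _ ≤ 2 * Real.pi * poissonIntegral (fun ζ => ‖f ζ‖ ^ 2) R (ω 0) := by
        gcongr
        exact circleAverage_norm_sq_comp_le hfR hr hωr hωR
    _ ≤ (R + ‖ω 0‖) / (R - ‖ω 0‖) * discIntegral f R :=
        two_pi_mul_poissonIntegral_le (hf.continuousOn_sphere hR.2) hω0R
    _ ≤ (R + ‖ω 0‖) / (R - ‖ω 0‖) * H2normSq f := by
        have := mem_ball_zero_iff.1 hω0R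
        exact mul_le_mul_of_nonneg_left (hf.discIntegral_le_H2normSq hR.1 hR.2)
          (div_nonneg (add_nonneg hR.1.le (norm_nonneg _)) (sub_pos.2 this).le)

lemma MemH2Disc.comp (hf : MemH2Disc f) (hω : DifferentiableOn ℂ ω (ball 0 1))
    (hmap : Set.MapsTo ω (ball 0 1) (ball 0 1)) : MemH2Disc (f ∘ ω) :=
  ⟨hf.1.comp hω hmap, _, fun _ => hf.discIntegral_comp_le hω hmap⟩

lemma MemH2Disc.H2normSq_comp_le (hf : MemH2Disc f) (hω : DifferentiableOn ℂ ω (ball 0 1))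
    (hmap : Set.MapsTo ω (ball 0 1) (ball 0 1)) :
    H2normSq (f ∘ ω) ≤ (1 + ‖ω 0‖) / (1 - ‖ω 0‖) * H2normSq f :=
  H2normSq_le fun _ => hf.discIntegral_comp_le hω hmap

end HardySpace

namespace InnerDisc

variable {θ : ℂ → ℂ} {z : ℂ}

lemma pow (h : InnerDisc θ) (n : ℕ) : InnerDisc fun z => θ z ^ n := by
  obtain ⟨hd, ⟨C, hC⟩, hl⟩ := h
  refine ⟨hd.pow n, ⟨C ^ n, fun z hz => ?_⟩, hl.mono ?_⟩
  · rw [norm_pow]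
    exact pow_le_pow_left₀ (norm_nonneg _) (hC z hz) n
  · rintro s ⟨L, hL, ht⟩
    exact ⟨L ^ n, by rw [norm_pow, hL, one_pow], ht.pow n⟩

lemma tendsto_discIntegral (h : InnerDisc θ) :
    Tendsto (discIntegral θ) (𝓝[<] 1) (𝓝 (2 * Real.pi)) := by
  obtain ⟨hd, ⟨C, hC⟩, hl⟩ := h
  have h01 : ∀ᶠ r : ℝ in 𝓝[<] 1, r ∈ Set.Ioo 0 1 := Ioo_mem_nhdsLT one_pos
  have hlim : Tendsto (discIntegral θ) (𝓝[<] 1)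
      (𝓝 (∫ _ : AddCircle (2 * Real.pi), (1 : ℝ))) := by
    refine tendsto_integral_filter_of_dominated_convergence (fun _ => C ^ 2) ?_ ?_
      (integrable_const _) ?_
    · filter_upwards [h01] with r hr
      exact ((continuous_comp_bdry hd.continuousOn hr.1.le hr.2).norm.pow 2).aestronglyMeasurable
    · filter_upwards [h01] with r hr
      refine .of_forall fun s => ?_
      rw [norm_pow, norm_norm]
      refine pow_le_pow_left₀ (norm_nonneg _) (hC _ ?_) 2
      rw [mem_ball_zero_iff, norm_real_mul_bdry hr.1.le]
      exact hr.2
    · filter_upwards [hl] with s ⟨L, hL, ht⟩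
      simpa only [hL, one_pow] using ht.norm.pow 2
  simpa [Measure.real, AddCircle.measure_univ, Real.pi_pos.le] using hlim

lemma norm_sq_le (h : InnerDisc θ) (hz : z ∈ ball 0 1) :
    ‖θ z‖ ^ 2 ≤ (1 + ‖z‖) / (1 - ‖z‖) := by
  have hz1 : ‖z‖ < 1 := mem_ball_zero_iff.1 hz
  have hle : ∀ᶠ R : ℝ in 𝓝[<] 1,
      2 * Real.pi * ‖θ z‖ ^ 2 ≤ (R + ‖z‖) / (R - ‖z‖) * discIntegral θ R := by
    filter_upwards [Ioo_mem_nhdsLT hz1] with R hR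
    have hθR : DiffContOnCl ℂ θ (ball 0 R) :=
      (h.1.mono (closedBall_subset_ball hR.2)).diffContOnCl_ball le_rfl
    have hzR : z ∈ ball 0 R := mem_ball_zero_iff.2 hR.1
    exact (mul_le_mul_of_nonneg_left (norm_sq_le_poissonIntegral hθR hzR)
      Real.two_pi_pos.le).trans (two_pi_mul_poissonIntegral_le
        (hθR.continuousOn_ball.mono sphere_subset_closedBall) hzR)
  have hlim := ge_of_tendsto ((tendsto_add_div_sub hz1).mul h.tendsto_discIntegral) hle
  rw [mul_comm] at hlim
  exact le_of_mul_le_mul_right hlim Real.two_pi_pos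

lemma norm_le_one (h : InnerDisc θ) (hz : z ∈ ball 0 1) : ‖θ z‖ ≤ 1 := by
  by_contra! hlt
  obtain ⟨n, hn⟩ := pow_unbounded_of_one_lt ((1 + ‖z‖) / (1 - ‖z‖)) (one_lt_pow₀ hlt two_ne_zero)
  have hpow := (h.pow n).norm_sq_le hz
  rw [norm_pow, ← pow_mul, mul_comm, pow_mul] at hpow
  exact hpow.not_gt hn

lemma mapsTo_ball (h : InnerDisc θ) (hnc : ¬ ∃ c : ℂ, ∀ z ∈ ball (0 : ℂ) 1, θ z = c) :
    Set.MapsTo θ (ball 0 1) (ball 0 1) := fun z hz => by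
  rw [mem_ball_zero_iff]
  refine (h.norm_le_one hz).lt_of_ne fun heq => hnc ⟨θ z, fun y hy => ?_⟩
  exact eqOn_of_isPreconnected_of_isMaxOn_norm (convex_ball _ _).isPreconnected isOpen_ball
    h.1 hz (fun y hy => (h.norm_le_one hy).trans_eq heq.symm) hy

end InnerDisc

section Parseval

lemma hasSum_norm_sq_of_orthonormal {𝕜 E ι : Type*} [RCLike 𝕜] [NormedAddCommGroup E]
    [InnerProductSpace 𝕜 E] {v : ι → E} (hv : Orthonormal 𝕜 v) {c : ι → 𝕜} {x : E}
    (hx : HasSum (fun i => c i • v i) x) : HasSum (fun i => ‖c i‖ ^ 2) (‖x‖ ^ 2) :=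
  (hx.norm.pow 2).congr fun s => hv.orthogonalFamily.norm_sum c s

lemma norm_sq_toLp_two {α 𝕜 : Type*} [MeasurableSpace α] [TopologicalSpace α] [BorelSpace α]
    [CompactSpace α] [RCLike 𝕜] (μ : Measure α) [IsFiniteMeasure μ] (F : C(α, 𝕜)) :
    ‖ContinuousMap.toLp 2 μ 𝕜 F‖ ^ 2 = ∫ x, ‖F x‖ ^ 2 ∂μ := by
  rw [← inner_self_eq_norm_sq (𝕜 := 𝕜), ContinuousMap.inner_toLp]
  simp only [RCLike.mul_conj, ← RCLike.ofReal_pow]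
  rw [integral_ofReal, RCLike.ofReal_re]

end Parseval

/-- `f` is the sum of the power series with coefficients `a` on the unit disc. -/
def HasCoeffs (a : ℕ → ℂ) (f : ℂ → ℂ) : Prop :=
  ∀ z ∈ ball (0 : ℂ) 1, HasSum (fun n => a n * z ^ n) (f z)

lemma exists_hasCoeffs {f : ℂ → ℂ} (hf : DifferentiableOn ℂ f (ball 0 1)) :
    ∃ a, HasCoeffs a f := by
  refine ⟨fun n => (n.factorial : ℂ)⁻¹ * iteratedDeriv n f 0, fun z hz => ?_⟩
  refine (hasSum_taylorSeries_on_ball hf hz).congr_fun fun n => ?_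
  simp only [sub_zero, smul_eq_mul]
  ring

namespace HasCoeffs

variable {a b : ℕ → ℂ} {f g : ℂ → ℂ} {r : ℝ}

lemma sub (ha : HasCoeffs a f) (hb : HasCoeffs b g) : HasCoeffs (a - b) (f - g) := fun z hz => by
  simpa only [Pi.sub_apply, sub_mul] using (ha z hz).sub (hb z hz)

lemma summable_norm (ha : HasCoeffs a f) (hr : 0 ≤ r) (hr1 : r < 1) :
    Summable fun n => ‖a n * (r : ℂ) ^ n‖ :=
  (ha r (by rwa [mem_ball_zero_iff, Complex.norm_of_nonneg hr])).summable.norm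

lemma exists_hasSum_fourier (ha : HasCoeffs a f) (hr : 0 ≤ r) (hr1 : r < 1) :
    ∃ F : C(AddCircle (2 * Real.pi), ℂ), (∀ s, F s = f (r * bdry s)) ∧
      HasSum (fun n : ℕ => (a n * (r : ℂ) ^ n) • fourier (n : ℤ)) F := by
  have hs : Summable fun n : ℕ =>
      (a n * (r : ℂ) ^ n) • (fourier (n : ℤ) : C(AddCircle (2 * Real.pi), ℂ)) :=
    .of_norm (by simpa only [norm_smul, fourier_norm, mul_one] using ha.summable_norm hr hr1)
  refine ⟨_, fun s => ?_, hs.hasSum⟩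
  refine ((ContinuousMap.evalCLM ℂ s).hasSum hs.hasSum).unique ?_
  have hs1 : (r : ℂ) * bdry s ∈ ball 0 1 := by rwa [mem_ball_zero_iff, norm_real_mul_bdry hr]
  refine (ha _ hs1).congr_fun fun n => ?_
  simp [bdry, fourier_apply, mul_pow, mul_assoc, AddCircle.toCircle_nsmul]

lemma hasSum_discIntegral (ha : HasCoeffs a f) (hr : 0 ≤ r) (hr1 : r < 1) :
    HasSum (fun n => 2 * Real.pi * ‖a n * (r : ℂ) ^ n‖ ^ 2) (discIntegral f r) := by
  obtain ⟨F, hF, hsum⟩ := ha.exists_hasSum_fourier hr hr1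
  have hL2 := (ContinuousMap.toLp (E := ℂ) 2 AddCircle.haarAddCircle ℂ).hasSum hsum
  have horth : Orthonormal ℂ fun n : ℕ => fourierLp (T := 2 * Real.pi) 2 (n : ℤ) :=
    orthonormal_fourier.comp _ Nat.cast_injective
  have hpars : HasSum (fun n => ‖a n * (r : ℂ) ^ n‖ ^ 2)
      (‖ContinuousMap.toLp 2 AddCircle.haarAddCircle ℂ F‖ ^ 2) :=
    hasSum_norm_sq_of_orthonormal horth (by simpa [fourierLp] using hL2)
  rw [norm_sq_toLp_two, AddCircle.integral_haarAddCircle] at hpars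
  simpa only [hF, smul_eq_mul, mul_inv_cancel_left₀ Real.two_pi_pos.ne', discIntegral]
    using hpars.mul_left (2 * Real.pi)

end HasCoeffs

/-- The dilation `f_ρ(z) = f(ρz)` of `f` by a real factor `ρ`, which for `ρ < 1` extends `f` across
the unit circle. -/
def dilation (ρ : ℝ) (f : ℂ → ℂ) : ℂ → ℂ := fun z => f (ρ * z)

section Dilation

variable {a : ℕ → ℂ} {f : ℂ → ℂ} {ρ : ℝ}

lemma mapsTo_real_mul_ball (hρ : 0 ≤ ρ) (hρ1 : ρ ≤ 1) :
    Set.MapsTo (fun z : ℂ => (ρ : ℂ) * z) (ball 0 1) (ball 0 1) := fun z hz => by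
  rw [mem_ball_zero_iff, norm_mul, Complex.norm_of_nonneg hρ]
  exact (mul_le_of_le_one_left (norm_nonneg z) hρ1).trans_lt (mem_ball_zero_iff.1 hz)

lemma differentiableOn_dilation (hf : DifferentiableOn ℂ f (ball 0 1)) (hρ : 0 ≤ ρ) (hρ1 : ρ ≤ 1) :
    DifferentiableOn ℂ (dilation ρ f) (ball 0 1) :=
  hf.comp (by fun_prop) (mapsTo_real_mul_ball hρ hρ1)

lemma MemH2Disc.dilate (hf : MemH2Disc f) (hρ : 0 ≤ ρ) (hρ1 : ρ ≤ 1) : MemH2Disc (dilation ρ f) :=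
  hf.comp (by fun_prop) (mapsTo_real_mul_ball hρ hρ1)

lemma HasCoeffs.dilate (ha : HasCoeffs a f) (hρ : 0 ≤ ρ) (hρ1 : ρ ≤ 1) :
    HasCoeffs (fun n => a n * (ρ : ℂ) ^ n) (dilation ρ f) := fun z hz => by
  simpa only [dilation, mul_pow, mul_assoc] using ha _ (mapsTo_real_mul_ball hρ hρ1 hz)

lemma HasCoeffs.H2normSq_le_tsum (ha : HasCoeffs a f) (hs : Summable fun n => ‖a n‖ ^ 2) :
    H2normSq f ≤ 2 * Real.pi * ∑' n, ‖a n‖ ^ 2 := by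
  refine H2normSq_le fun r hr hr1 =>
    hasSum_le (fun n => ?_) (ha.hasSum_discIntegral hr.le hr1) (hs.hasSum.mul_left _)
  rw [norm_mul, norm_pow, Complex.norm_of_nonneg hr.le]
  gcongr
  exact mul_le_of_le_one_right (norm_nonneg _) (pow_le_one₀ hr.le hr1.le)

lemma HasCoeffs.summable_norm_sq (ha : HasCoeffs a f) (hf : MemH2Disc f) :
    Summable fun n => ‖a n‖ ^ 2 := by
  refine summable_of_sum_le (c := (2 * Real.pi)⁻¹ * H2normSq f) (fun _ => sq_nonneg _) fun s => ?_
  have hlim : Tendsto (fun r : ℝ => ∑ n ∈ s, ‖a n * (r : ℂ) ^ n‖ ^ 2) (𝓝[<] 1)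
      (𝓝 (∑ n ∈ s, ‖a n * ((1 : ℝ) : ℂ) ^ n‖ ^ 2)) :=
    Tendsto.mono_left (Continuous.tendsto (by fun_prop) 1) nhdsWithin_le_nhds
  simp only [ofReal_one, one_pow, mul_one] at hlim
  refine le_of_tendsto hlim ?_
  filter_upwards [Ioo_mem_nhdsLT (zero_lt_one' ℝ)] with r hr
  rw [le_inv_mul_iff₀ Real.two_pi_pos, Finset.mul_sum]
  exact (sum_le_hasSum s (fun n _ => by positivity)
    (ha.hasSum_discIntegral hr.1.le hr.2)).trans (hf.discIntegral_le_H2normSq hr.1 hr.2)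

lemma MemH2Disc.tendsto_H2normSq_sub_dilation (hf : MemH2Disc f) :
    Tendsto (fun ρ => H2normSq (f - dilation ρ f)) (𝓝[<] 1) (𝓝 0) := by
  obtain ⟨a, ha⟩ := exists_hasCoeffs hf.1
  have h01 : ∀ᶠ ρ : ℝ in 𝓝[<] 1, ρ ∈ Set.Ioo 0 1 := Ioo_mem_nhdsLT one_pos
  have hsum := ha.summable_norm_sq hf
  have hbound {ρ : ℝ} (hρ : ρ ∈ Set.Ioo 0 1) (n : ℕ) :
      ‖a n - a n * (ρ : ℂ) ^ n‖ ^ 2 ≤ ‖a n‖ ^ 2 := by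
    have hle : ρ ^ n ≤ 1 := pow_le_one₀ hρ.1.le hρ.2.le
    have hnorm : ‖(1 : ℂ) - (ρ : ℂ) ^ n‖ = 1 - ρ ^ n := by
      exact_mod_cast Complex.norm_of_nonneg (sub_nonneg.2 hle)
    rw [← mul_one_sub, norm_mul, hnorm]
    gcongr
    exact mul_le_of_le_one_right (norm_nonneg _) (sub_le_self _ (pow_nonneg hρ.1.le n))
  have hle : ∀ᶠ ρ : ℝ in 𝓝[<] 1, H2normSq (f - dilation ρ f)
      ≤ 2 * Real.pi * ∑' n, ‖a n - a n * (ρ : ℂ) ^ n‖ ^ 2 := by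
    filter_upwards [h01] with ρ hρ
    exact (ha.sub (ha.dilate hρ.1.le hρ.2.le)).H2normSq_le_tsum
      (.of_nonneg_of_le (fun _ => sq_nonneg _) (hbound hρ) hsum)
  have hlim (n : ℕ) : Tendsto (fun ρ : ℝ => ‖a n - a n * (ρ : ℂ) ^ n‖ ^ 2) (𝓝[<] 1) (𝓝 0) := by
    have hcont : Continuous fun ρ : ℝ => ‖a n - a n * (ρ : ℂ) ^ n‖ ^ 2 := by fun_prop
    simpa using (hcont.tendsto 1).mono_left nhdsWithin_le_nhds
  have htannery := tendsto_tsum_of_dominated_convergence hsum hlim <| by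
    filter_upwards [h01] with ρ hρ n
    simpa only [norm_pow, norm_norm] using hbound hρ n
  rw [tsum_zero] at htannery
  refine squeeze_zero' (.of_forall fun _ => H2normSq_nonneg _) hle ?_
  simpa only [mul_zero] using htannery.const_mul (2 * Real.pi)

end Dilation

section PolynomialApproximation

variable {f h : ℂ → ℂ} {ρ : ℝ}

lemma exists_norm_eval_le (q : ℂ[X]) : ∃ M : ℝ, ∀ z ∈ ball (0 : ℂ) 1, ‖q.eval z‖ ≤ M := by
  obtain ⟨M, hM⟩ := (isCompact_closedBall (0 : ℂ) 1).exists_bound_of_continuousOn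
    q.continuous.continuousOn
  exact ⟨M, fun z hz => hM z (ball_subset_closedBall hz)⟩

lemma MemH2Disc.mul_eval (hf : MemH2Disc f) (q : ℂ[X]) : MemH2Disc (f * (q.eval ·)) := by
  obtain ⟨M, hM⟩ := exists_norm_eval_le q
  exact hf.mul q.differentiable.differentiableOn hM

lemma exists_polynomial_norm_dilation_sub_eval_lt (hh : DifferentiableOn ℂ h (ball 0 1))
    (hρ : 0 ≤ ρ) (hρ1 : ρ < 1) {ε : ℝ} (hε : 0 < ε) :
    ∃ q : ℂ[X], ∀ z ∈ ball 0 1, ‖dilation ρ h z - q.eval z‖ < ε := by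
  obtain ⟨a, ha⟩ := exists_hasCoeffs hh
  have hbound (n : ℕ) (z : ℂ) (hz : z ∈ ball 0 1) :
      ‖a n * (ρ : ℂ) ^ n * z ^ n‖ ≤ ‖a n * (ρ : ℂ) ^ n‖ := by
    rw [norm_mul, norm_pow z]
    exact mul_le_of_le_one_right (norm_nonneg _)
      (pow_le_one₀ (norm_nonneg z) (mem_ball_zero_iff.1 hz).le)
  obtain ⟨N, hN⟩ := (tendstoUniformlyOn_iff.1
    (tendstoUniformlyOn_tsum_nat (ha.summable_norm hρ hρ1) hbound) ε hε).exists
  refine ⟨∑ n ∈ Finset.range N, .C (a n * (ρ : ℂ) ^ n) * .X ^ n, fun z hz => ?_⟩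
  simpa only [← (ha.dilate hρ hρ1.le z hz).tsum_eq, Polynomial.eval_finsetSum, Polynomial.eval_mul,
    Polynomial.eval_C, Polynomial.eval_pow, Polynomial.eval_X, dist_eq_norm] using hN z hz

end PolynomialApproximation

/-- The closure of `S` in the `H²` norm. That the differences lie in `H²` is required separately,
since `H2normSq` takes the junk value `0` at functions with unbounded integral means. -/
def h2Closure (S : Set (ℂ → ℂ)) : Set (ℂ → ℂ) :=
  {g | ∀ ε > 0, ∃ s ∈ S, MemH2Disc (g - s) ∧ H2normSq (g - s) < ε}

section Closure

variable {S S' : Set (ℂ → ℂ)} {g : ℂ → ℂ}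

lemma map_mem_h2Closure (T : (ℂ → ℂ) →ₗ[ℂ] (ℂ → ℂ)) {K : ℝ}
    (hT : ∀ u, MemH2Disc u → MemH2Disc (T u) ∧ H2normSq (T u) ≤ K * H2normSq u)
    (hg : g ∈ h2Closure S) (hS : ∀ s ∈ S, T s ∈ h2Closure S') : T g ∈ h2Closure S' := by
  intro ε hε
  obtain ⟨δ, hδ, hKδ⟩ := exists_pos_mul_lt (by positivity : 0 < ε / 4) |K|
  obtain ⟨s, hs, hgs, hgs_lt⟩ := hg δ hδ
  obtain ⟨s', hs', hss', hss'_lt⟩ := hS s hs (ε / 4) (by positivity)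
  obtain ⟨hTgs, hTgs_le⟩ := hT _ hgs
  have hTgs_lt : H2normSq (T (g - s)) < ε / 4 :=
    calc H2normSq (T (g - s)) ≤ K * H2normSq (g - s) := hTgs_le
      _ ≤ |K| * δ := mul_le_mul (le_abs_self K) hgs_lt.le (H2normSq_nonneg _) (abs_nonneg K)
      _ < ε / 4 := hKδ
  have hsplit : T g - s' = T (g - s) + (T s - s') := by rw [map_sub, sub_add_sub_cancel]
  have hadd := hTgs.H2normSq_add_le hss'
  rw [← hsplit] at hadd
  exact ⟨s', hs', hsplit ▸ hTgs.add hss', by linarith⟩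

lemma h2Closure_trans (hg : g ∈ h2Closure S) (hS : S ⊆ h2Closure S') : g ∈ h2Closure S' :=
  map_mem_h2Closure (K := 1) .id (fun _ hu => ⟨hu, (one_mul _).ge⟩) hg hS

lemma mem_h2Closure_of_tendsto {ι : Type*} {l : Filter ι} [l.NeBot] {u : ι → ℂ → ℂ}
    (hu : ∀ᶠ i in l, u i ∈ h2Closure S) (hmem : ∀ᶠ i in l, MemH2Disc (g - u i))
    (hlim : Tendsto (fun i => H2normSq (g - u i)) l (𝓝 0)) : g ∈ h2Closure S := by
  refine h2Closure_trans (S := {u | u ∈ h2Closure S}) (fun ε hε => ?_) fun _ hu => hu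
  obtain ⟨i, hi, hgi, hlt⟩ := (hu.and (hmem.and (hlim.eventually_lt_const hε))).exists
  exact ⟨u i, hi, hgi, hlt⟩

end Closure

/-- The multiples `F p` of a function `F` by polynomials `p`. -/
def polynomialMultiples (F : ℂ → ℂ) : Set (ℂ → ℂ) :=
  Set.range fun p : ℂ[X] => F * (p.eval ·)

section Outer

variable {f g h F ω : ℂ → ℂ} {ρ : ℝ}

lemma isOuterDisc_iff :
    IsOuterDisc F ↔ MemH2Disc F ∧ ∀ g, MemH2Disc g → g ∈ h2Closure (polynomialMultiples F) := by
  refine and_congr_right fun hF => forall₂_congr fun g hg => forall₂_congr fun ε hε => ?_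
  simp only [polynomialMultiples, Set.exists_range_iff, hg.sub (hF.mul_eval _), true_and]
  rfl

lemma MemH2Disc.mul_dilation_mem_h2Closure (hF : MemH2Disc F) (hh : DifferentiableOn ℂ h (ball 0 1))
    (hρ : 0 ≤ ρ) (hρ1 : ρ < 1) :
    F * dilation ρ h ∈ h2Closure (polynomialMultiples F) := by
  intro ε hε
  obtain ⟨δ, hδ, hδε⟩ := exists_pos_mul_lt hε (H2normSq F)
  obtain ⟨q, hq⟩ := exists_polynomial_norm_dilation_sub_eval_lt hh hρ hρ1 (Real.sqrt_pos.2 hδ)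
  have hdiff : DifferentiableOn ℂ (dilation ρ h - (q.eval ·)) (ball 0 1) :=
    (differentiableOn_dilation hh hρ hρ1.le).sub q.differentiable.differentiableOn
  have hbound (z : ℂ) (hz : z ∈ ball 0 1) : ‖(dilation ρ h - (q.eval ·)) z‖ ≤ √δ :=
    (hq z hz).le
  refine ⟨_, ⟨q, rfl⟩, ?_⟩
  simp only [← mul_sub]
  refine ⟨hF.mul hdiff hbound, (hF.H2normSq_mul_le hdiff hbound).trans_lt ?_⟩
  rwa [Real.sq_sqrt hδ.le, mul_comm]

lemma MemH2Disc.mul_mem_h2Closure {M : ℝ} (hF : MemH2Disc F) (hh : DifferentiableOn ℂ h (ball 0 1))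
    (hM : ∀ z ∈ ball 0 1, ‖h z‖ ≤ M) : F * h ∈ h2Closure (polynomialMultiples F) := by
  have h01 : ∀ᶠ ρ : ℝ in 𝓝[<] 1, ρ ∈ Set.Ioo 0 1 := Ioo_mem_nhdsLT one_pos
  have hFh : MemH2Disc (F * h) := hF.mul hh hM
  have hsplit (ρ : ℝ) : F * h - F * dilation ρ h =
      (F * h - dilation ρ (F * h)) + (F - dilation ρ F) * -dilation ρ h := by
    funext z
    simp only [dilation, Pi.sub_apply, Pi.mul_apply, Pi.add_apply, Pi.neg_apply]
    ring
  have hdiff {ρ : ℝ} (hρ : ρ ∈ Set.Ioo 0 1) : DifferentiableOn ℂ (-dilation ρ h) (ball 0 1) :=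
    (differentiableOn_dilation hh hρ.1.le hρ.2.le).neg
  have hbound {ρ : ℝ} (hρ : ρ ∈ Set.Ioo 0 1) (z : ℂ) (hz : z ∈ ball 0 1) :
      ‖(-dilation ρ h) z‖ ≤ M := by
    rw [Pi.neg_apply, norm_neg]
    exact hM _ (mapsTo_real_mul_ball hρ.1.le hρ.2.le hz)
  have hFρ {ρ : ℝ} (hρ : ρ ∈ Set.Ioo 0 1) : MemH2Disc (F - dilation ρ F) :=
    hF.sub (hF.dilate hρ.1.le hρ.2.le)
  have hFhρ {ρ : ℝ} (hρ : ρ ∈ Set.Ioo 0 1) : MemH2Disc (F * h - dilation ρ (F * h)) :=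
    hFh.sub (hFh.dilate hρ.1.le hρ.2.le)
  have hlim : Tendsto (fun ρ : ℝ => 2 * (H2normSq (F * h - dilation ρ (F * h))
      + M ^ 2 * H2normSq (F - dilation ρ F))) (𝓝[<] 1) (𝓝 0) := by
    simpa only [mul_zero, add_zero] using (hFh.tendsto_H2normSq_sub_dilation.add
      (hF.tendsto_H2normSq_sub_dilation.const_mul (M ^ 2))).const_mul 2
  refine mem_h2Closure_of_tendsto (u := fun ρ => F * dilation ρ h) (l := 𝓝[<] 1) ?_ ?_
    (squeeze_zero' (.of_forall fun _ => H2normSq_nonneg _) ?_ hlim)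
  · filter_upwards [h01] with ρ hρ
    exact hF.mul_dilation_mem_h2Closure hh hρ.1.le hρ.2
  · filter_upwards [h01] with ρ hρ
    rw [hsplit]
    exact (hFhρ hρ).add ((hFρ hρ).mul (hdiff hρ) (hbound hρ))
  · filter_upwards [h01] with ρ hρ
    rw [hsplit]
    refine ((hFhρ hρ).H2normSq_add_le ((hFρ hρ).mul (hdiff hρ) (hbound hρ))).trans ?_
    gcongr
    exact (hFρ hρ).H2normSq_mul_le (hdiff hρ) (hbound hρ)

lemma memH2Disc_one : MemH2Disc 1 :=
  ⟨differentiableOn_const 1, 2 * Real.pi, fun r _ _ => by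
    simp [discIntegral_eq_circleAverage, Real.circleAverage_const]⟩

lemma MemH2Disc.mem_h2Closure_polynomialMultiples_one (hg : MemH2Disc g) :
    g ∈ h2Closure (polynomialMultiples 1) := by
  have h01 : ∀ᶠ ρ : ℝ in 𝓝[<] 1, ρ ∈ Set.Ioo 0 1 := Ioo_mem_nhdsLT one_pos
  refine mem_h2Closure_of_tendsto (l := 𝓝[<] 1) ?_ ?_ hg.tendsto_H2normSq_sub_dilation
  · filter_upwards [h01] with ρ hρ
    simpa only [one_mul] using memH2Disc_one.mul_dilation_mem_h2Closure hg.1 hρ.1.le hρ.2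
  · filter_upwards [h01] with ρ hρ
    exact hg.sub (hg.dilate hρ.1.le hρ.2.le)

lemma IsOuterDisc.eval_mem_h2Closure_comp (hf : IsOuterDisc f)
    (hω : DifferentiableOn ℂ ω (ball 0 1)) (hmap : Set.MapsTo ω (ball 0 1) (ball 0 1))
    (q : ℂ[X]) : (q.eval ·) ∈ h2Closure (polynomialMultiples (f ∘ ω)) := by
  obtain ⟨M, hM⟩ := exists_norm_eval_le q
  have hq : DifferentiableOn ℂ (q.eval ·) (ball 0 1) := q.differentiable.differentiableOn
  let T := (LinearMap.mulRight ℂ (q.eval · : ℂ → ℂ)).comp (LinearMap.funLeft ℂ ℂ ω)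
  have hT_one : T 1 = (q.eval ·) := one_mul _
  have hT_mul (p : ℂ[X]) :
      T (f * (p.eval ·)) = (f ∘ ω) * fun z => p.eval (ω z) * q.eval z :=
    funext fun z => mul_assoc (f (ω z)) (p.eval (ω z)) (q.eval z)
  rw [← hT_one]
  refine map_mem_h2Closure T (K := M ^ 2 * ((1 + ‖ω 0‖) / (1 - ‖ω 0‖)))
    (fun u hu => ⟨(hu.comp hω hmap).mul hq hM, ?_⟩) ((isOuterDisc_iff.1 hf).2 1 memH2Disc_one) ?_
  · rw [mul_assoc]
    exact ((hu.comp hω hmap).H2normSq_mul_le hq hM).trans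
      (mul_le_mul_of_nonneg_left (hu.H2normSq_comp_le hω hmap) (sq_nonneg M))
  · rintro _ ⟨p, rfl⟩
    obtain ⟨L, hL⟩ := exists_norm_eval_le p
    rw [hT_mul]
    refine (hf.1.comp hω hmap).mul_mem_h2Closure (M := L * M)
      ((p.differentiable.comp_differentiableOn hω).mul hq) fun z hz => ?_
    exact (norm_mul_le _ _).trans (mul_le_mul (hL _ (hmap hz)) (hM z hz) (norm_nonneg _)
      ((norm_nonneg _).trans (hL _ (hmap hz))))

theorem outer_comp_inner_general (hf : IsOuterDisc f) (hω : DifferentiableOn ℂ ω (ball 0 1))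
    (hmap : Set.MapsTo ω (ball 0 1) (ball 0 1)) : IsOuterDisc (f ∘ ω) := by
  refine isOuterDisc_iff.2 ⟨hf.1.comp hω hmap, fun g hg =>
    h2Closure_trans hg.mem_h2Closure_polynomialMultiples_one ?_⟩
  rintro _ ⟨q, rfl⟩
  simpa only [one_mul] using hf.eval_mem_h2Closure_comp hω hmap q

end Outer

/-- If `f ∈ H²` is outer and `ω ∈ H^∞` is a nonconstant inner function, then `f ∘ ω`
belongs to `H²` and is outer. -/
theorem outer_comp_inner (f ω : ℂ → ℂ)
    (hf : MemH2Disc f) (hfo : IsOuterDisc f)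
    (hω : InnerDisc ω)
    (hωnc : ¬ ∃ c : ℂ, ∀ z ∈ Metric.ball (0 : ℂ) 1, ω z = c) :
    MemH2Disc (f ∘ ω) ∧ IsOuterDisc (f ∘ ω) := by
  have houter := outer_comp_inner_general hfo hω.1 (hω.mapsTo_ball hωnc)
  exact ⟨houter.1, houter⟩
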